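/- Graphic MDMTSP bound: let G be an unweighted connected graph with shortest-path metric, D ⊆ V(G) depots, and T an optimal tour using |E(T)| edges in which exactly the depots in D' ⊆ D have nonempty subtours. Then T contains a constrained spanning forest for (G, D') of weight (cardinality) at most |E(T)| − |D'|, and the tour F ∪̇ M produced by running Multi-Depot Christofides-Serdyukov with depot set D' satisfies |E(F ∪̇ M)| ≤ |E(T)| − |D'| + (1/2)(|E(T)| + 2(|D'| − 1)) = (3/2)|E(T)| − 1. -/

import Mathlib

open scoped Classical

noncomputable def deg {V : Type*} (E : Multiset (Sym2 V)) (v : V) : ℕ :=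
  (E.filter (fun e => v ∈ e)).card

def Connects {V : Type*} (E : Multiset (Sym2 V)) : V → V → Prop :=
  Relation.ReflTransGen (fun a b => s(a, b) ∈ E)

noncomputable def mweight {V : Type*} (w : Sym2 V → ℝ) (E : Multiset (Sym2 V)) : ℝ :=
  (E.map w).sum

def IsMetric {V : Type*} (w : Sym2 V → ℝ) : Prop :=
  (∀ e, 0 ≤ w e) ∧ ∀ a b c : V, w s(a, c) ≤ w s(a, b) + w s(b, c)

def IsTour {V : Type*} (D : Finset V) (T : Multiset (Sym2 V)) : Prop :=
  (∀ e ∈ T, ¬ Sym2.IsDiag e) ∧ (∀ v, Even (deg T v)) ∧ ∀ v, ∃ d ∈ D, Connects T v d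

def IsCSF {V : Type*} (D : Finset V) (F : Finset (Sym2 V)) : Prop :=
  (∀ e ∈ F, ¬ Sym2.IsDiag e) ∧
  (SimpleGraph.fromEdgeSet (↑F : Set (Sym2 V))).IsAcyclic ∧
  ∀ v, ∃ d ∈ D, Connects F.val v d

def IsPM {V : Type*} (U : Finset V) (M : Multiset (Sym2 V)) : Prop :=
  (∀ e ∈ M, ¬ Sym2.IsDiag e) ∧ ∀ v, deg M v = if v ∈ U then 1 else 0

def IsRPPSol {V : Type*} (R J : Multiset (Sym2 V)) : Prop :=
  (∀ e ∈ J, ¬ Sym2.IsDiag e) ∧ (∀ v, Even (deg (R + J) v)) ∧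
  ∀ u v : V, (∃ e ∈ R + J, u ∈ e) → (∃ e ∈ R + J, v ∈ e) → Connects (R + J) u v
def IsCSFgr {V : Type*} (D D' : Finset V) (F : Finset (Sym2 V)) : Prop :=
  (∀ e ∈ F, ¬ Sym2.IsDiag e) ∧
  (SimpleGraph.fromEdgeSet (↑F : Set (Sym2 V))).IsAcyclic ∧
  (∀ v, ∃ d ∈ D, Connects F.val v d) ∧
  ∀ v, (∃ e ∈ F, v ∈ e) → ∃ d ∈ D', Connects F.val v d

/-!
Grow a forest from the active depots `D'` inside `T`, one leaf at a time: it spans the `n`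
vertices touched by `T` with `n - |D'|` edges, and `n ≤ |E(T)|` because each of them has degree at
least two. Conversely, every constrained forest needs `n - |D'|` edges, each of weight at least
one, so a minimum one, `F`, consists of unit edges between vertices touched by `T`. At most
`|D'| - 1` edges of `F` are needed to merge the subtours that `F` links; adding each of them twice
to `T` gives an even multigraph `H` in which the endpoints of every edge of `F` are connected.
Hence `H` splits into two edge sets that both have the same odd-degree vertices as `F`, and
shortcutting the cheaper one to a perfect matching costs at most half the weight of `H`.
-/

open scoped symmDiff

section Connectivity

variable {V : Type*} {E : Multiset (Sym2 V)} {a b : V}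

theorem Connects.symm (h : Connects E a b) : Connects E b a := by
  have : Std.Symm fun x y : V => s(x, y) ∈ E := ⟨fun _ _ hxy => Sym2.eq_swap ▸ hxy⟩
  exact Relation.ReflTransGen.stdSymm.symm a b h

theorem Connects.mono {E' : Multiset (Sym2 V)} (hE : E ⊆ E') (h : Connects E a b) :
    Connects E' a b :=
  Relation.ReflTransGen.mono (fun _ _ hxy => hE hxy) _ _ h

theorem Connects.exists_edge_into {S : Set V} (h : Connects E a b) (ha : a ∉ S) (hb : b ∈ S) :
    ∃ x ∉ S, ∃ y ∈ S, s(x, y) ∈ E := by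
  induction h with
  | refl => exact absurd hb ha
  | @tail x y _ hxy ih =>
    by_cases hx : x ∈ S
    · exact ih hx
    · exact ⟨x, hx, y, hb, hxy⟩

/-- The vertices incident to an edge of `E`. Isolated vertices of a tour, that is, depots whose
subtour is empty, are not among them. -/
noncomputable def vertexSupport (E : Multiset (Sym2 V)) : Finset V :=
  E.toFinset.biUnion Sym2.toFinset

theorem mem_vertexSupport {v : V} : v ∈ vertexSupport E ↔ ∃ e ∈ E, v ∈ e := by
  simp [vertexSupport]

theorem Connects.eq_or_right_mem_vertexSupport (h : Connects E a b) :
    a = b ∨ b ∈ vertexSupport E := by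
  rcases h.cases_tail with rfl | ⟨c, _, hcb⟩
  · exact .inl rfl
  · exact .inr (mem_vertexSupport.2 ⟨_, hcb, Sym2.mem_mk_right c b⟩)

end Connectivity

section Weight

variable {V : Type*} {w : Sym2 V → ℝ} {E : Multiset (Sym2 V)}

theorem mweight_cons (e : Sym2 V) (E : Multiset (Sym2 V)) :
    mweight w (e ::ₘ E) = w e + mweight w E := by
  simp [mweight]

theorem mweight_add (A B : Multiset (Sym2 V)) :
    mweight w (A + B) = mweight w A + mweight w B := by
  simp [mweight]

theorem card_le_mweight (h : ∀ e ∈ E, 1 ≤ w e) : (E.card : ℝ) ≤ mweight w E := by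
  simpa [mweight] using Multiset.card_nsmul_le_sum (s := E.map w) (a := 1) (by simpa using h)

theorem mweight_eq_card (h : ∀ e ∈ E, w e = 1) : mweight w E = E.card := by
  simp [mweight, Multiset.map_congr rfl h]

theorem mweight_add_card_le {A : Multiset (Sym2 V)} (hA : A ≤ E) (h : ∀ e ∈ E, 1 ≤ w e) :
    mweight w A + E.card ≤ mweight w E + A.card := by
  obtain ⟨B, rfl⟩ := Multiset.le_iff_exists_add.1 hA
  have hB : (B.card : ℝ) ≤ mweight w B :=
    card_le_mweight fun e he => h e (Multiset.mem_add.2 (.inr he))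
  rw [mweight_add, Multiset.card_add]
  push_cast
  linarith

end Weight

section Degree

variable {V : Type*}

theorem deg_cons (e : Sym2 V) (E : Multiset (Sym2 V)) (v : V) :
    deg (e ::ₘ E) v = deg E v + if v ∈ e then 1 else 0 := by
  by_cases h : v ∈ e <;> simp [deg, h]

theorem deg_pos_of_mem_vertexSupport {E : Multiset (Sym2 V)} {v : V} (hv : v ∈ vertexSupport E) :
    0 < deg E v := by
  obtain ⟨e, he, hve⟩ := mem_vertexSupport.1 hv
  exact Multiset.card_pos_iff_exists_mem.2 ⟨e, Multiset.mem_filter.2 ⟨he, hve⟩⟩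

theorem sum_deg_le_two_mul_card (S : Finset V) (E : Multiset (Sym2 V)) :
    ∑ v ∈ S, deg E v ≤ 2 * E.card := by
  induction E using Multiset.induction_on with
  | empty => simp [deg]
  | cons e E ih =>
    have hends : (S.filter (· ∈ e)).card ≤ 2 :=
      calc (S.filter (· ∈ e)).card ≤ e.toFinset.card := Finset.card_le_card fun v hv => by
            simpa using (Finset.mem_filter.1 hv).2
        _ ≤ 2 := by rw [Sym2.card_toFinset]; split_ifs <;> simp
    simp only [deg_cons, Finset.sum_add_distrib, Finset.sum_boole, Multiset.card_cons, Nat.cast_id]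
    omega

theorem card_vertexSupport_le_card {E : Multiset (Sym2 V)} (h : ∀ v, Even (deg E v)) :
    (vertexSupport E).card ≤ E.card := by
  have hdeg : ∑ _v ∈ vertexSupport E, 2 ≤ ∑ v ∈ vertexSupport E, deg E v :=
    Finset.sum_le_sum fun v hv => by
      have := deg_pos_of_mem_vertexSupport hv
      obtain ⟨k, hk⟩ := h v
      omega
  have := sum_deg_le_two_mul_card (vertexSupport E) E
  simp only [Finset.sum_const, smul_eq_mul] at hdeg
  omega

theorem exists_eq_cons_of_deg_pos {E : Multiset (Sym2 V)} {v : V} (h : 0 < deg E v) :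
    ∃ a E', E = s(v, a) ::ₘ E' := by
  obtain ⟨e, he⟩ := Multiset.card_pos_iff_exists_mem.1 h
  obtain ⟨heE, a, rfl⟩ := Multiset.mem_filter.1 he
  exact ⟨a, Multiset.exists_cons_of_mem heE⟩

theorem exists_eq_cons_cons_of_two_le_deg {E : Multiset (Sym2 V)} {v : V} (h : 2 ≤ deg E v) :
    ∃ a b E', E = s(v, a) ::ₘ s(v, b) ::ₘ E' := by
  obtain ⟨a, E₁, rfl⟩ := exists_eq_cons_of_deg_pos (by omega : 0 < deg E v)
  rw [deg_cons, if_pos (Sym2.mem_mk_left v a)] at h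
  obtain ⟨b, E₂, rfl⟩ := exists_eq_cons_of_deg_pos (by omega : 0 < deg E₁ v)
  exact ⟨a, b, E₂, rfl⟩

end Degree

section GrownForest

variable {V : Type*}

/-- `IsGrownForest R S F` says that the edge set `F` on the vertex set `S` arises from the isolated
roots `R` by repeatedly attaching a new leaf. Every tree of such a forest contains exactly one
root. -/
inductive IsGrownForest (R : Finset V) : Finset V → Finset (Sym2 V) → Prop
  | roots : IsGrownForest R R ∅
  | attach {S : Finset V} {F : Finset (Sym2 V)} {x y : V} (h : IsGrownForest R S F)
      (hx : x ∉ S) (hy : y ∈ S) : IsGrownForest R (insert x S) (insert s(x, y) F)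

namespace IsGrownForest

variable {R S : Finset V} {F : Finset (Sym2 V)}

theorem roots_subset (h : IsGrownForest R S F) : R ⊆ S := by
  induction h with
  | roots => exact subset_rfl
  | attach _ _ _ ih => exact ih.trans (Finset.subset_insert _ _)

theorem mem_of_mem_edge (h : IsGrownForest R S F) : ∀ e ∈ F, ∀ v ∈ e, v ∈ S := by
  induction h with
  | roots => simp
  | attach _ _ hy ih =>
    simp only [Finset.forall_mem_insert, Sym2.mem_iff, forall_eq_or_imp, forall_eq,
      Finset.mem_insert_self, Finset.mem_insert_of_mem hy, true_and]
    exact fun e he v hv => Finset.mem_insert_of_mem (ih e he v hv)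

theorem not_isDiag (h : IsGrownForest R S F) : ∀ e ∈ F, ¬ e.IsDiag := by
  induction h with
  | roots => simp
  | attach _ hx hy ih =>
    simp only [Finset.forall_mem_insert, Sym2.mk_isDiag_iff]
    exact ⟨(ne_of_mem_of_not_mem hy hx).symm, ih⟩

theorem card_add_card_roots (h : IsGrownForest R S F) : F.card + R.card = S.card := by
  induction h with
  | roots => simp
  | @attach S F x y h hx _ ih =>
    have hxy : s(x, y) ∉ F := fun he => hx (h.mem_of_mem_edge _ he x (Sym2.mem_mk_left x y))
    rw [Finset.card_insert_of_notMem hxy, Finset.card_insert_of_notMem hx]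
    omega

theorem isAcyclic (h : IsGrownForest R S F) :
    (SimpleGraph.fromEdgeSet (F : Set (Sym2 V))).IsAcyclic := by
  induction h with
  | roots => simp
  | @attach S F x y h hx hy ih =>
    have hinsert : SimpleGraph.fromEdgeSet (insert s(x, y) F : Finset (Sym2 V)) =
        SimpleGraph.fromEdgeSet (F : Set (Sym2 V)) ⊔ SimpleGraph.edge x y := by
      rw [SimpleGraph.edge, ← SimpleGraph.fromEdgeSet_union, Finset.coe_insert, Set.insert_eq,
        Set.union_comm]
    rw [hinsert]
    refine .sup_edge_of_not_reachable ?_ ih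
    rintro ⟨_ | ⟨hadj, _⟩⟩
    · exact hx hy
    · exact hx (h.mem_of_mem_edge _ ((SimpleGraph.fromEdgeSet_adj _).1 hadj).1 x
        (Sym2.mem_mk_left _ _))

theorem exists_connects_root (h : IsGrownForest R S F) :
    ∀ v ∈ S, ∃ d ∈ R, Connects F.val v d := by
  induction h with
  | roots => exact fun v hv => ⟨v, hv, .refl⟩
  | @attach S F x y _ _ hy ih =>
    have hmono : F.val ⊆ (insert s(x, y) F).val := Finset.subset_insert _ _
    refine (Finset.forall_mem_insert _ _ _).2 ⟨?_, fun v hv => ?_⟩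
    · obtain ⟨d, hd, hyd⟩ := ih y hy
      exact ⟨d, hd, (hyd.mono hmono).head (Finset.mem_insert_self _ _)⟩
    · obtain ⟨d, hd, hvd⟩ := ih v hv
      exact ⟨d, hd, hvd.mono hmono⟩

theorem mweight_add_card_roots_le {w : Sym2 V → ℝ} {E : Multiset (Sym2 V)}
    (hF : IsGrownForest R (vertexSupport E) F) (hFE : F.val ≤ E) (hE : ∀ v, Even (deg E v))
    (hw : ∀ e ∈ E, 1 ≤ w e) : mweight w F.val + R.card ≤ mweight w E := by
  have hweight : mweight w F.val + E.card ≤ mweight w E + F.card := mweight_add_card_le hFE hw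
  have hcard : (F.card : ℝ) + R.card ≤ E.card := by
    exact_mod_cast hF.card_add_card_roots.trans_le (card_vertexSupport_le_card hE)
  linarith

end IsGrownForest

theorem exists_isGrownForest_le {R : Finset V} {E : Multiset (Sym2 V)}
    (h : ∀ v ∈ vertexSupport E, ∃ d ∈ R, Connects E v d) :
    ∃ F : Finset (Sym2 V), F.val ≤ E ∧ IsGrownForest R (R ∪ vertexSupport E) F := by
  obtain ⟨S, hS, hSmax⟩ := ((R ∪ vertexSupport E).powerset.filter fun S =>
      ∃ F : Finset (Sym2 V), F.val ⊆ E ∧ IsGrownForest R S F).exists_max_image Finset.card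
    ⟨R, Finset.mem_filter.2
      ⟨Finset.mem_powerset.2 Finset.subset_union_left, ∅, by simp, .roots⟩⟩
  simp only [Finset.mem_filter, Finset.mem_powerset] at hS hSmax
  obtain ⟨hSsub, F, hFE, hF⟩ := hS
  suffices hSeq : S = R ∪ vertexSupport E from
    ⟨F, (Multiset.le_iff_subset F.nodup).2 hFE, hSeq ▸ hF⟩
  by_contra hSne
  obtain ⟨v, hv, hvS⟩ := Finset.exists_of_ssubset (hSsub.ssubset_of_ne hSne)
  obtain ⟨d, hd, hvd⟩ := h v <| (Finset.mem_union.1 hv).resolve_left fun hvR =>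
    hvS (hF.roots_subset hvR)
  obtain ⟨x, hx, y, hy, hxy⟩ := hvd.exists_edge_into (S := S) hvS (hF.roots_subset hd)
  have hxE : x ∈ vertexSupport E := mem_vertexSupport.2 ⟨_, hxy, Sym2.mem_mk_left x y⟩
  have hlarger := hSmax (insert x S)
    ⟨Finset.insert_subset (Finset.mem_union_right _ hxE) hSsub, insert s(x, y) F,
      (Finset.forall_mem_insert _ _ _).2 ⟨hxy, fun _ he => hFE he⟩, hF.attach hx hy⟩
  rw [Finset.card_insert_of_notMem hx] at hlarger
  omega

end GrownForest

section Boundary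

variable {V : Type*}

/-- The mod 2 boundary of an edge multiset: the parity of each degree. It marks the odd-degree
vertices, so the classical `U`-joins are the edge sets whose boundary is the indicator of `U`.
A loop contributes `1` at its vertex, since `deg` counts it once. -/
noncomputable def boundary (E : Multiset (Sym2 V)) (v : V) : ZMod 2 :=
  deg E v

theorem boundary_add (A B : Multiset (Sym2 V)) : boundary (A + B) = boundary A + boundary B := by
  ext v
  simp [boundary, deg]

theorem boundary_singleton {a b : V} (h : a ≠ b) :
    boundary {s(a, b)} = Pi.single a 1 + Pi.single b 1 := by
  ext v
  have hdeg : deg {s(a, b)} v = if v = a ∨ v = b then 1 else 0 := by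
    simpa [deg] using deg_cons s(a, b) 0 v
  simp only [boundary, hdeg, Pi.add_apply, Pi.single_apply, Nat.cast_ite]
  grind

theorem boundary_cons {a b : V} (h : a ≠ b) (E : Multiset (Sym2 V)) :
    boundary (s(a, b) ::ₘ E) = Pi.single a 1 + Pi.single b 1 + boundary E := by
  rw [← Multiset.singleton_add, boundary_add, boundary_singleton h]

theorem boundary_eq_zero {E : Multiset (Sym2 V)} (h : ∀ v, Even (deg E v)) : boundary E = 0 :=
  funext fun v => (ZMod.natCast_eq_zero_iff_even).2 (h v)

theorem boundary_symmDiff (A B : Finset (Sym2 V)) :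
    boundary (A ∆ B).val = boundary A.val + boundary B.val := by
  have hval : A.val + B.val = (A ∆ B).val + ((A ∩ B).val + (A ∩ B).val) := by
    ext e
    simp only [Multiset.count_add, Multiset.count_eq_of_nodup (Finset.nodup _), Finset.mem_val,
      Finset.mem_symmDiff, Finset.mem_inter]
    grind
  rw [← boundary_add, hval, boundary_add, boundary_add _ (A ∩ B).val, ZModModule.add_self, add_zero]

theorem Connects.exists_boundary_eq {H : Multiset (Sym2 V)} (hH : ∀ e ∈ H, ¬ e.IsDiag) {a b : V}
    (h : Connects H a b) :
    ∃ J : Finset (Sym2 V), J.val ⊆ H ∧ boundary J.val = Pi.single a 1 + Pi.single b 1 := by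
  induction h with
  | refl => exact ⟨∅, by simp, by rw [ZModModule.add_self]; exact boundary_eq_zero (by simp [deg])⟩
  | @tail x y _ hxy ih =>
    obtain ⟨J, hJH, hJ⟩ := ih
    have hne : x ≠ y := by simpa using hH _ hxy
    refine ⟨J ∆ {s(x, y)}, fun e he => ?_, ?_⟩
    · rcases Finset.mem_symmDiff.1 he with ⟨heJ, _⟩ | ⟨hexy, _⟩
      · exact hJH heJ
      · exact Finset.mem_singleton.1 hexy ▸ hxy
    · rw [boundary_symmDiff, hJ, Finset.singleton_val, boundary_singleton hne, add_assoc,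
        ← add_assoc (Pi.single x 1), ZModModule.add_self, zero_add]

theorem exists_subset_boundary_eq {H F : Multiset (Sym2 V)} (hH : ∀ e ∈ H, ¬ e.IsDiag)
    (hF : ∀ e ∈ F, ¬ e.IsDiag) (hconn : ∀ a b, s(a, b) ∈ F → Connects H a b) :
    ∃ J : Finset (Sym2 V), J.val ⊆ H ∧ boundary J.val = boundary F := by
  induction F using Multiset.induction_on with
  | empty => exact ⟨∅, by simp, by simp⟩
  | cons e F ih =>
    induction e using Sym2.ind with | _ a b
    rw [Multiset.forall_mem_cons] at hF
    obtain ⟨J, hJH, hJ⟩ := ih hF.2 fun x y hxy => hconn x y (Multiset.mem_cons_of_mem hxy)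
    obtain ⟨P, hPH, hP⟩ := (hconn a b (Multiset.mem_cons_self _ _)).exists_boundary_eq hH
    refine ⟨P ∆ J, fun e he => ?_, ?_⟩
    · exact (Finset.mem_symmDiff.1 he).elim (fun h => hPH h.1) fun h => hJH h.1
    · rw [boundary_symmDiff, hP, hJ, boundary_cons (by simpa using hF.1)]

end Boundary

section Matching

variable {V : Type*} {w : Sym2 V → ℝ} {J : Multiset (Sym2 V)}

theorem exists_shortcut (hw : IsMetric w) (hJ : ∀ e ∈ J, ¬ e.IsDiag) {v : V}
    (hv : 2 ≤ deg J v) :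
    ∃ J' : Multiset (Sym2 V), J'.card < J.card ∧ (∀ e ∈ J', ¬ e.IsDiag) ∧
      boundary J' = boundary J ∧ mweight w J' ≤ mweight w J := by
  obtain ⟨a, b, E, rfl⟩ := exists_eq_cons_cons_of_two_le_deg hv
  simp only [Multiset.forall_mem_cons, Sym2.mk_isDiag_iff] at hJ
  obtain ⟨hva, hvb, hE⟩ := hJ
  have hboundary : boundary (s(v, a) ::ₘ s(v, b) ::ₘ E) =
      Pi.single a 1 + Pi.single b 1 + boundary E := by
    calc boundary (s(v, a) ::ₘ s(v, b) ::ₘ E)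
        = (Pi.single v 1 + Pi.single v 1) + (Pi.single a 1 + Pi.single b 1 + boundary E) := by
          rw [boundary_cons hva, boundary_cons hvb]
          abel
      _ = Pi.single a 1 + Pi.single b 1 + boundary E := by rw [ZModModule.add_self, zero_add]
  by_cases hab : a = b
  · subst hab
    refine ⟨E, by simp, hE, by rw [hboundary, ZModModule.add_self, zero_add], ?_⟩
    have := hw.1 s(v, a)
    rw [mweight_cons, mweight_cons]
    linarith
  · refine ⟨s(a, b) ::ₘ E, by simp, by simpa using ⟨hab, hE⟩, ?_, ?_⟩
    · rw [hboundary, boundary_cons hab]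
    · have := hw.2 a v b
      rw [Sym2.eq_swap (a := a) (b := v)] at this
      simp only [mweight_cons]
      linarith

theorem exists_deg_le_one_boundary_eq (hw : IsMetric w) (hJ : ∀ e ∈ J, ¬ e.IsDiag) :
    ∃ M : Multiset (Sym2 V), (∀ e ∈ M, ¬ e.IsDiag) ∧ (∀ v, deg M v ≤ 1) ∧
      boundary M = boundary J ∧ mweight w M ≤ mweight w J := by
  induction hn : J.card using Nat.strong_induction_on generalizing J with
  | _ n ih =>
    subst hn
    by_cases hdeg : ∀ v, deg J v ≤ 1
    · exact ⟨J, hJ, hdeg, rfl, le_rfl⟩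
    · push Not at hdeg
      obtain ⟨v, hv⟩ := hdeg
      obtain ⟨J', hcard, hJ', hboundary', hweight'⟩ := exists_shortcut hw hJ hv
      obtain ⟨M, hM, hMdeg, hboundary, hweight⟩ := ih _ hcard hJ' rfl
      exact ⟨M, hM, hMdeg, hboundary.trans hboundary', hweight.trans hweight'⟩

theorem exists_isPM_le_mweight {U : Finset V} (hw : IsMetric w) (hJ : ∀ e ∈ J, ¬ e.IsDiag)
    (hU : ∀ v, v ∈ U ↔ boundary J v = 1) :
    ∃ M, IsPM U M ∧ mweight w M ≤ mweight w J := by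
  obtain ⟨M, hM, hMdeg, hboundary, hweight⟩ := exists_deg_le_one_boundary_eq hw hJ
  refine ⟨M, ⟨hM, fun v => ?_⟩, hweight⟩
  have hv : v ∈ U ↔ Odd (deg M v) := by
    rw [hU, ← hboundary, boundary, ZMod.natCast_eq_one_iff_odd]
  have := hMdeg v
  split_ifs with hvU <;> rw [hv, Nat.odd_iff] at hvU <;> omega

theorem exists_isPM_le_half_mweight {H F : Multiset (Sym2 V)} {U : Finset V} (hw : IsMetric w)
    (hH : ∀ e ∈ H, ¬ e.IsDiag) (hHeven : boundary H = 0) (hF : ∀ e ∈ F, ¬ e.IsDiag)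
    (hconn : ∀ a b, s(a, b) ∈ F → Connects H a b) (hU : ∀ v, v ∈ U ↔ Odd (deg F v)) :
    ∃ M, IsPM U M ∧ mweight w M ≤ mweight w H / 2 := by
  obtain ⟨J, hJH, hJ⟩ := exists_subset_boundary_eq hH hF hconn
  obtain ⟨C, rfl⟩ := Multiset.le_iff_exists_add.1 ((Multiset.le_iff_subset J.nodup).2 hJH)
  have hC : boundary C = boundary F := by
    rw [boundary_add, add_eq_zero_iff_eq_neg, ZModModule.neg_eq_self] at hHeven
    rw [← hHeven, hJ]
  have hUF : ∀ v, v ∈ U ↔ boundary F v = 1 := fun v => by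
    rw [hU, boundary, ZMod.natCast_eq_one_iff_odd]
  obtain ⟨M₁, hM₁, hle₁⟩ := exists_isPM_le_mweight hw
    (fun e he => hH e (Multiset.mem_add.2 (.inl he))) (hJ ▸ hUF)
  obtain ⟨M₂, hM₂, hle₂⟩ := exists_isPM_le_mweight hw
    (fun e he => hH e (Multiset.mem_add.2 (.inr he))) (hC ▸ hUF)
  rw [mweight_add]
  rcases le_total (mweight w J.val) (mweight w C) with hle | hle
  · exact ⟨M₁, hM₁, by linarith⟩
  · exact ⟨M₂, hM₂, by linarith⟩

end Matching

section Tour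

variable {V : Type*} {D : Finset V} {T : Multiset (Sym2 V)} {F : Finset (Sym2 V)}

theorem exists_linking_edges {R : Finset V} {F : Multiset (Sym2 V)} (hR : R.Nonempty)
    (hroot : ∀ v ∈ vertexSupport F, ∃ d ∈ R, Connects T v d) :
    ∃ K ⊆ F, K.card + 1 ≤ R.card ∧ ∀ a b, s(a, b) ∈ F → Connects (K + T) a b := by
  induction R using Finset.strongInduction generalizing T with
  | H R ih =>
    by_cases hconn : ∀ a b, s(a, b) ∈ F → Connects T a b
    · exact ⟨0, by simp, by simpa using hR, by simpa using hconn⟩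
    push Not at hconn
    obtain ⟨a, b, hab, hnot⟩ := hconn
    obtain ⟨p, hp, hap⟩ := hroot a (mem_vertexSupport.2 ⟨_, hab, Sym2.mem_mk_left a b⟩)
    obtain ⟨q, hq, hbq⟩ := hroot b (mem_vertexSupport.2 ⟨_, hab, Sym2.mem_mk_right a b⟩)
    have hpq : p ≠ q := by
      rintro rfl
      exact hnot (hap.trans hbq.symm)
    have hpR : p ∈ R.erase q := Finset.mem_erase.2 ⟨hpq, hp⟩
    have hmono : T ⊆ s(a, b) ::ₘ T := Multiset.subset_cons T _
    have hlink : Connects (s(a, b) ::ₘ T) p q :=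
      ((hap.symm.mono hmono).tail (Multiset.mem_cons_self _ _)).trans (hbq.mono hmono)
    obtain ⟨K, hKF, hKcard, hK⟩ := ih (R.erase q) (Finset.erase_ssubset hq)
      (T := s(a, b) ::ₘ T) ⟨p, hpR⟩ fun v hv => by
        obtain ⟨d, hd, hvd⟩ := hroot v hv
        by_cases hdq : d = q
        · exact ⟨p, hpR, (hdq ▸ hvd.mono hmono).trans hlink.symm⟩
        · exact ⟨d, Finset.mem_erase.2 ⟨hdq, hd⟩, hvd.mono hmono⟩
    refine ⟨s(a, b) ::ₘ K, Multiset.cons_subset.2 ⟨hab, hKF⟩, ?_, fun x y hxy => ?_⟩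
    · rw [Multiset.card_cons]
      have := Finset.card_erase_add_one hq
      omega
    · simpa using hK x y hxy

theorem IsTour.exists_connects_active (hT : IsTour D T) {v : V} (hv : v ∈ vertexSupport T) :
    ∃ d ∈ D ∩ vertexSupport T, Connects T v d := by
  obtain ⟨d, hd, hvd⟩ := hT.2.2 v
  refine ⟨d, Finset.mem_inter.2 ⟨hd, ?_⟩, hvd⟩
  rcases hvd.eq_or_right_mem_vertexSupport with rfl | hdT
  · exact hv
  · exact hdT

theorem IsTour.mem_depots_of_notMem_vertexSupport (hT : IsTour D T) {v : V}
    (hv : v ∉ vertexSupport T) : v ∈ D := by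
  obtain ⟨d, hd, hvd⟩ := hT.2.2 v
  rcases hvd.symm.eq_or_right_mem_vertexSupport with rfl | hvT
  · exact hd
  · exact absurd hvT hv

theorem IsTour.exists_spanning_isGrownForest (hT : IsTour D T) :
    ∃ F : Finset (Sym2 V), F.val ≤ T ∧
      IsGrownForest (D ∩ vertexSupport T) (vertexSupport T) F := by
  simpa [Finset.union_eq_right.2 Finset.inter_subset_right] using
    exists_isGrownForest_le fun _ hv => hT.exists_connects_active hv

theorem IsTour.isCSFgr_of_isGrownForest (hT : IsTour D T)
    (hF : IsGrownForest (D ∩ vertexSupport T) (vertexSupport T) F) :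
    IsCSFgr D (D ∩ vertexSupport T) F := by
  refine ⟨hF.not_isDiag, hF.isAcyclic, fun v => ?_, ?_⟩
  · by_cases hv : v ∈ vertexSupport T
    · obtain ⟨d, hd, hvd⟩ := hF.exists_connects_root v hv
      exact ⟨d, (Finset.mem_inter.1 hd).1, hvd⟩
    · exact ⟨v, hT.mem_depots_of_notMem_vertexSupport hv, .refl⟩
  · rintro v ⟨e, he, hve⟩
    exact hF.exists_connects_root v (hF.mem_of_mem_edge e he v hve)

theorem IsCSFgr.card_vertices_le {D' : Finset V} (hF : IsCSFgr D D' F) :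
    (D' ∪ vertexSupport F.val).card ≤ F.card + D'.card := by
  obtain ⟨F₀, hF₀F, hF₀⟩ := exists_isGrownForest_le fun v hv => hF.2.2.2 v (mem_vertexSupport.1 hv)
  rw [← hF₀.card_add_card_roots]
  exact Nat.add_le_add_right (Finset.card_le_card (Finset.val_le_iff.1 hF₀F)) _

theorem IsCSFgr.vertexSupport_subset (hF : IsCSFgr D (D ∩ vertexSupport T) F) :
    vertexSupport T ⊆ D ∩ vertexSupport T ∪ vertexSupport F.val := by
  intro v hv
  obtain ⟨d, hd, hvd⟩ := hF.2.2.1 v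
  rcases hvd.symm.eq_or_right_mem_vertexSupport with rfl | hvF
  · exact Finset.mem_union_left _ (Finset.mem_inter.2 ⟨hd, hv⟩)
  · exact Finset.mem_union_right _ hvF

theorem IsCSFgr.eq_one_and_vertexSupport_subset {w : Sym2 V → ℝ}
    (hF : IsCSFgr D (D ∩ vertexSupport T) F) (hw : ∀ e ∈ F, 1 ≤ w e)
    (hle : mweight w F.val + (D ∩ vertexSupport T).card ≤ (vertexSupport T).card) :
    (∀ e ∈ F, w e = 1) ∧ vertexSupport F.val ⊆ vertexSupport T := by
  have hFw : (F.card : ℝ) ≤ mweight w F.val := card_le_mweight hw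
  have hsub := hF.vertexSupport_subset
  have hlower := (Finset.card_le_card hsub).trans hF.card_vertices_le
  have hupper : F.card + (D ∩ vertexSupport T).card ≤ (vertexSupport T).card := by
    exact_mod_cast (by linarith :
      (F.card : ℝ) + (D ∩ vertexSupport T).card ≤ (vertexSupport T).card)
  constructor
  · have hlower' : ((vertexSupport T).card : ℝ) ≤ F.card + (D ∩ vertexSupport T).card := by
      exact_mod_cast hlower
    have hsum : ∑ _e ∈ F, (1 : ℝ) = ∑ e ∈ F, w e := by
      change _ = mweight w F.val
      rw [Finset.sum_const, nsmul_one]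
      linarith
    exact fun e he => ((Finset.sum_eq_sum_iff_of_le hw).1 hsum e he).symm
  · rw [Finset.eq_of_subset_of_card_le hsub (hF.card_vertices_le.trans hupper)]
    exact Finset.subset_union_right

theorem IsTour.exists_isPM_add_one_le {w : Sym2 V → ℝ} {U : Finset V} (hw : IsMetric w)
    (hT : IsTour D T) (hne : (D ∩ vertexSupport T).Nonempty) (hF : ∀ e ∈ F, ¬ e.IsDiag)
    (hFw : ∀ e ∈ F, w e = 1) (hFT : vertexSupport F.val ⊆ vertexSupport T)
    (hU : ∀ v, v ∈ U ↔ Odd (deg F.val v)) :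
    ∃ M, IsPM U M ∧ mweight w M + 1 ≤ mweight w T / 2 + (D ∩ vertexSupport T).card := by
  obtain ⟨K, hKF, hKcard, hK⟩ := exists_linking_edges (F := F.val) hne
    fun v hv => hT.exists_connects_active (hFT hv)
  have hloopless : ∀ e ∈ K + (K + T), ¬ e.IsDiag := by
    simp only [Multiset.mem_add]
    rintro e (he | he | he)
    exacts [hF e (hKF he), hF e (hKF he), hT.1 e he]
  have heven : boundary (K + (K + T)) = 0 := by
    rw [boundary_add, boundary_add, boundary_eq_zero hT.2.1, add_zero, ZModModule.add_self]
  obtain ⟨M, hM, hMle⟩ := exists_isPM_le_half_mweight hw hloopless heven hF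
    (fun a b hab => (hK a b hab).mono (Multiset.subset_of_le (Multiset.le_add_left _ _))) hU
  refine ⟨M, hM, ?_⟩
  have hKcard' : (K.card : ℝ) + 1 ≤ (D ∩ vertexSupport T).card := by exact_mod_cast hKcard
  rw [mweight_add, mweight_add, mweight_eq_card fun e he => hFw e (hKF he)] at hMle
  linarith

end Tour

section GraphMetric

variable {V : Type*} {G : SimpleGraph V} {w : Sym2 V → ℝ}

theorem isMetric_of_eq_dist (hG : G.Connected) (hw : ∀ u v, w s(u, v) = G.dist u v) :
    IsMetric w := by
  refine ⟨Sym2.ind fun a b => by rw [hw]; positivity, fun a b c => ?_⟩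
  rw [hw, hw, hw]
  exact_mod_cast hG.dist_triangle

theorem one_le_of_eq_dist (hG : G.Connected) (hw : ∀ u v, w s(u, v) = G.dist u v) :
    ∀ e : Sym2 V, ¬ e.IsDiag → 1 ≤ w e :=
  Sym2.ind fun a b hab => by
    rw [hw]
    exact_mod_cast hG.pos_dist_of_ne hab

theorem eq_one_of_mem_edgeSet (hw : ∀ u v, w s(u, v) = G.dist u v) :
    ∀ e ∈ G.edgeSet, w e = 1 :=
  Sym2.ind fun a b hab => by
    rw [hw, SimpleGraph.dist_eq_one_iff_adj.2 hab, Nat.cast_one]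

end GraphMetric

theorem stmt13_general {V : Type*} (D : Finset V) (w : Sym2 V → ℝ) (hw : IsMetric w)
    (hw_one : ∀ e, ¬ Sym2.IsDiag e → 1 ≤ w e)
    (T : Multiset (Sym2 V)) (hT : IsTour D T) (hTw : ∀ e ∈ T, w e = 1)
    (D' : Finset V) (hD' : ∀ x, x ∈ D' ↔ x ∈ D ∧ ∃ e ∈ T, x ∈ e)
    (hD'ne : D'.Nonempty)
    (F : Finset (Sym2 V)) (hF : IsCSFgr D D' F)
    (hFmin : ∀ F₂, IsCSFgr D D' F₂ → ∑ e ∈ F, w e ≤ ∑ e ∈ F₂, w e)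
    (U : Finset V) (hU : ∀ v, v ∈ U ↔ Odd (deg F.val v))
    (M : Multiset (Sym2 V)) (_hM : IsPM U M)
    (hMmin : ∀ M', IsPM U M' → mweight w M ≤ mweight w M') :
    (∃ F' : Finset (Sym2 V), F'.val ≤ T ∧ IsCSFgr D D' F' ∧
      ∑ e ∈ F', w e ≤ mweight w T - D'.card) ∧
    mweight w (F.val + M) ≤ 3 / 2 * mweight w T - 1 := by
  obtain rfl : D' = D ∩ vertexSupport T := by
    ext x
    rw [hD', Finset.mem_inter, mem_vertexSupport]
  obtain ⟨F', hF'T, hgrown⟩ := hT.exists_spanning_isGrownForest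
  have hF' := hT.isCSFgr_of_isGrownForest hgrown
  have hF'w := hgrown.mweight_add_card_roots_le hF'T hT.2.1 fun e he => (hTw e he).ge
  have hFF' : mweight w F.val ≤ mweight w F'.val := hFmin F' hF'
  refine ⟨⟨F', hF'T, hF', le_sub_iff_add_le.2 hF'w⟩, ?_⟩
  have hF'span : mweight w F'.val + (D ∩ vertexSupport T).card = (vertexSupport T).card := by
    rw [mweight_eq_card fun e he => hTw e (Multiset.mem_of_le hF'T he)]
    exact_mod_cast hgrown.card_add_card_roots
  obtain ⟨hFunit, hFT⟩ := hF.eq_one_and_vertexSupport_subset (fun e he => hw_one e (hF.1 e he))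
    (by linarith)
  obtain ⟨M', hM', hM'le⟩ := hT.exists_isPM_add_one_le hw hD'ne hF.1 hFunit hFT hU
  have hMM' := hMmin M' hM'
  rw [mweight_add]
  linarith

theorem stmt13 {V : Type*} [Fintype V] [DecidableEq V] (G : SimpleGraph V)
    (hG : G.Connected) (D : Finset V)
    (wd : Sym2 V → ℝ)
    (hwd : ∀ u v : V, wd s(u, v) = G.dist u v)
    (T : Multiset (Sym2 V)) (hT : IsTour D T)
    (hTG : ∀ e ∈ T, e ∈ G.edgeSet)
    (hTmin : ∀ T', IsTour D T' → mweight wd T ≤ mweight wd T')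
    (D' : Finset V) (hD' : ∀ x, x ∈ D' ↔ x ∈ D ∧ ∃ e ∈ T, x ∈ e)
    (hD'ne : D'.Nonempty)
    (F : Finset (Sym2 V)) (hF : IsCSFgr D D' F)
    (hFmin : ∀ F₂, IsCSFgr D D' F₂ → ∑ e ∈ F, wd e ≤ ∑ e ∈ F₂, wd e)
    (U : Finset V) (hU : ∀ v, v ∈ U ↔ Odd (deg F.val v))
    (M : Multiset (Sym2 V)) (hM : IsPM U M)
    (hMmin : ∀ M', IsPM U M' → mweight wd M ≤ mweight wd M') :
    (∃ F' : Finset (Sym2 V), F'.val ≤ T ∧ IsCSFgr D D' F' ∧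
      ∑ e ∈ F', wd e ≤ mweight wd T - D'.card) ∧
    mweight wd (F.val + M) ≤ 3 / 2 * mweight wd T - 1 :=
  stmt13_general D wd (isMetric_of_eq_dist hG hwd) (one_le_of_eq_dist hG hwd) T hT
    (fun e he => eq_one_of_mem_edgeSet hwd e (hTG e he)) D' hD' hD'ne F hF hFmin U hU M hM hMmin
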